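/- Let 1 < s < r be integers. For every ε > 0 there exists a constant c > 0 such that for all sufficiently large n divisible by r there exists an n-vertex graph G with minimum degree at least (1 − s/r)·n such that, for p = c·p_s(n), the probability that G^p = G ∪ G_{n,p} contains a K_r-factor is less than ε. -/

import Mathlib

open Finset
open scoped Classical

/-- The degree of a vertex (number of neighbours). -/
noncomputable def degR {V : Type*} (G : SimpleGraph V) (v : V) : ℕ :=
  Nat.card (G.neighborSet v)

/-- The number of edges of a graph on `Fin n`. -/
noncomputable def edgeCount {n : ℕ} (H : SimpleGraph (Fin n)) : ℕ := Nat.card H.edgeSet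

/-- The probability that the binomial random graph `G_{n,p}` satisfies the property `P`. -/
noncomputable def Pr (n : ℕ) (p : ℝ) (P : SimpleGraph (Fin n) → Prop) : ℝ :=
  ∑ H : SimpleGraph (Fin n),
    if P H then p ^ edgeCount H * (1 - p) ^ (n.choose 2 - edgeCount H) else 0

/-- `G` has a `K_r`-factor: a partition of the vertex set into `r`-cliques. -/
def HasCliqueFactor {n : ℕ} (G : SimpleGraph (Fin n)) (r : ℕ) : Prop :=
  ∃ P : Finpartition (Finset.univ : Finset (Fin n)), ∀ c ∈ P.parts, G.IsNClique r c

/-- The threshold function `p_s(n)`: `log n / n` if `s = 2` and `n^{-φ(s)}` with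
`φ(s) = 2s/((s-1)(s+2))` if `s ≥ 3`. -/
noncomputable def pThr (s n : ℕ) : ℝ :=
  if s = 2 then Real.log n / n
  else (n : ℝ) ^ (-(2 * (s : ℝ)) / (((s : ℝ) - 1) * ((s : ℝ) + 2)))

/-- The number of edges of `G` within the vertex set `S`. -/
noncomputable def edgesIn {V : Type*} (G : SimpleGraph V) (S : Set V) : ℕ :=
  Nat.card {e : Sym2 V // e ∈ G.edgeSet ∧ ∀ v ∈ e, v ∈ S}

/-- The number of ordered adjacent pairs between `S` and `T`. -/
noncomputable def edgesBtw {V : Type*} (G : SimpleGraph V) (S T : Set V) : ℕ :=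
  Nat.card {p : V × V // p.1 ∈ S ∧ p.2 ∈ T ∧ G.Adj p.1 p.2}

/-- The edge density of the pair `(S, T)` in `G`. -/
noncomputable def density {V : Type*} (G : SimpleGraph V) (S T : Set V) : ℝ :=
  (edgesBtw G S T : ℝ) / ((S.ncard : ℝ) * (T.ncard : ℝ))

/-- The pair `(S, T)` is `(ε, d)`-regular in `G`. -/
def IsRegularPair {V : Type*} (G : SimpleGraph V) (S T : Set V) (ε d : ℝ) : Prop :=
  ∀ X ⊆ S, ∀ Y ⊆ T, ε * S.ncard ≤ (X.ncard : ℝ) → ε * T.ncard ≤ (Y.ncard : ℝ) →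
    |density G X Y - d| < ε

/-- The pair `(S, T)` is `(ε, d, ϑ)`-super-regular in `G`. -/
def IsSuperRegularPair {V : Type*} (G : SimpleGraph V) (S T : Set V) (ε d ϑ : ℝ) : Prop :=
  IsRegularPair G S T ε d ∧
  (∀ v ∈ S, ϑ * T.ncard ≤ ((T ∩ G.neighborSet v).ncard : ℝ)) ∧
  (∀ v ∈ T, ϑ * S.ncard ≤ ((S ∩ G.neighborSet v).ncard : ℝ))


/-- Weight of a graph. -/
noncomputable def wt (n : ℕ) (p : ℝ) (H : SimpleGraph (Fin n)) : ℝ :=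
  p ^ edgeCount H * (1 - p) ^ (n.choose 2 - edgeCount H)

/-- Expectation over the random graph. -/
noncomputable def Ex (n : ℕ) (p : ℝ) (f : SimpleGraph (Fin n) → ℝ) : ℝ :=
  ∑ H, wt n p H * f H

/-- All potential edges. -/
noncomputable def allE (n : ℕ) : Finset (Sym2 (Fin n)) :=
  (⊤ : SimpleGraph (Fin n)).edgeFinset

lemma mem_allE {n : ℕ} (e : Sym2 (Fin n)) : e ∈ allE n ↔ ¬ e.IsDiag := by
  simp [allE]

lemma card_allE (n : ℕ) : (allE n).card = n.choose 2 := by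
  unfold allE
  have := SimpleGraph.card_edgeFinset_top_eq_card_choose_two (V := Fin n)
  rw [Fintype.card_fin] at this
  convert this

lemma edgeCount_eq {n : ℕ} (H : SimpleGraph (Fin n)) :
    edgeCount H = H.edgeFinset.card := by
  unfold edgeCount
  rw [Nat.card_eq_fintype_card, SimpleGraph.edgeFinset_card]

lemma Ex_prod_all (n : ℕ) (p : ℝ) (g h : Sym2 (Fin n) → ℝ) :
    Ex n p (fun H => ∏ e ∈ allE n, (if e ∈ H.edgeSet then g e else h e))
      = ∏ e ∈ allE n, (p * g e + (1 - p) * h e) := by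
  rw [Finset.prod_add]
  unfold Ex
  refine Finset.sum_bij' (fun H _ => H.edgeFinset)
    (fun t _ => SimpleGraph.fromEdgeSet (t : Set (Sym2 (Fin n)))) ?_ ?_ ?_ ?_ ?_
  · intro H _
    rw [Finset.mem_powerset]
    intro e he
    rw [mem_allE]
    exact H.not_isDiag_of_mem_edgeSet (by simpa using he)
  · intro t _; simp
  · intro H _
    simp
  · intro t ht
    rw [Finset.mem_powerset] at ht
    ext e
    have := fun he => (mem_allE e).1 (ht he)
    simp only [SimpleGraph.mem_edgeFinset, SimpleGraph.edgeSet_fromEdgeSet]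
    simp only [Set.mem_sdiff, Finset.mem_coe]
    constructor
    · exact fun h => h.1
    · intro h
      exact ⟨h, by simpa using this h⟩
  · intro H _
    have hsub : H.edgeFinset ⊆ allE n := by
      intro e he
      rw [mem_allE]
      exact H.not_isDiag_of_mem_edgeSet (by simpa using he)
    unfold wt
    beta_reduce
    rw [edgeCount_eq, ← card_allE, ← Finset.card_sdiff_of_subset hsub,
      Finset.prod_mul_distrib, Finset.prod_mul_distrib, Finset.prod_const, Finset.prod_const,
      ← Finset.prod_sdiff hsub]
    have h1 : ∏ e ∈ allE n \ H.edgeFinset, (if e ∈ H.edgeSet then g e else h e)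
        = ∏ e ∈ allE n \ H.edgeFinset, h e := by
      refine Finset.prod_congr rfl fun e he => ?_
      rw [Finset.mem_sdiff, SimpleGraph.mem_edgeFinset] at he
      rw [if_neg he.2]
    have h2 : ∏ e ∈ H.edgeFinset, (if e ∈ H.edgeSet then g e else h e)
        = ∏ e ∈ H.edgeFinset, g e := by
      refine Finset.prod_congr rfl fun e he => ?_
      rw [SimpleGraph.mem_edgeFinset] at he
      rw [if_pos he]
    rw [h1, h2]
    ring

lemma Ex_prod (n : ℕ) (p : ℝ) (F : Finset (Sym2 (Fin n))) (hF : F ⊆ allE n)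
    (g h : Sym2 (Fin n) → ℝ) :
    Ex n p (fun H => ∏ e ∈ F, (if e ∈ H.edgeSet then g e else h e))
      = ∏ e ∈ F, (p * g e + (1 - p) * h e) := by
  have := Ex_prod_all n p (fun e => if e ∈ F then g e else 1) (fun e => if e ∈ F then h e else 1)
  rw [← Finset.prod_subset hF] at this
  · rw [Finset.prod_congr rfl (g := fun e => p * g e + (1 - p) * h e)] at this
    · rw [← this]
      congr 1
      funext H
      rw [← Finset.prod_subset hF]
      · refine Finset.prod_congr rfl fun e he => ?_
        simp [he]
      · intro e _ he
        simp [he]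
    · intro e he
      simp [he]
  · intro e _ he
    simp [he]

lemma Ex_one (n : ℕ) (p : ℝ) : Ex n p (fun _ => 1) = 1 := by
  have := Ex_prod n p ∅ (by simp) (fun _ => 1) (fun _ => 1)
  simpa using this

lemma wt_nonneg {n : ℕ} {p : ℝ} (h0 : 0 ≤ p) (h1 : p ≤ 1) (H : SimpleGraph (Fin n)) :
    0 ≤ wt n p H := by
  unfold wt
  have : 0 ≤ 1 - p := by linarith
  positivity

lemma Ex_mono {n : ℕ} {p : ℝ} (h0 : 0 ≤ p) (h1 : p ≤ 1) {f g : SimpleGraph (Fin n) → ℝ}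
    (hfg : ∀ H, f H ≤ g H) : Ex n p f ≤ Ex n p g :=
  Finset.sum_le_sum fun H _ => mul_le_mul_of_nonneg_left (hfg H) (wt_nonneg h0 h1 H)

lemma Ex_add (n : ℕ) (p : ℝ) (f g : SimpleGraph (Fin n) → ℝ) :
    Ex n p (fun H => f H + g H) = Ex n p f + Ex n p g := by
  simp [Ex, mul_add, Finset.sum_add_distrib]

lemma Ex_smul (n : ℕ) (p c : ℝ) (f : SimpleGraph (Fin n) → ℝ) :
    Ex n p (fun H => c * f H) = c * Ex n p f := by
  simp only [Ex, Finset.mul_sum]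
  exact Finset.sum_congr rfl fun H _ => by ring

lemma Ex_sum {ι : Type*} (n : ℕ) (p : ℝ) (s : Finset ι) (f : ι → SimpleGraph (Fin n) → ℝ) :
    Ex n p (fun H => ∑ i ∈ s, f i H) = ∑ i ∈ s, Ex n p (f i) := by
  simp only [Ex, Finset.mul_sum]
  exact Finset.sum_comm

lemma Pr_eq (n : ℕ) (p : ℝ) (P : SimpleGraph (Fin n) → Prop) :
    Pr n p P = Ex n p (fun H => if P H then 1 else 0) := by
  unfold Pr Ex wt
  exact Finset.sum_congr rfl fun H _ => by by_cases h : P H <;> simp [h]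

/-- Edges at `v` into `A`. -/
noncomputable def starE {n : ℕ} (A : Finset (Fin n)) (v : Fin n) : Finset (Sym2 (Fin n)) :=
  (A.erase v).image (fun w => s(v, w))

/-- Edges inside `S`. -/
noncomputable def ins {n : ℕ} (S : Finset (Fin n)) : Finset (Sym2 (Fin n)) :=
  S.offDiag.image (Quot.mk _)

lemma starE_sub {n : ℕ} (A : Finset (Fin n)) (v : Fin n) : starE A v ⊆ allE n := by
  intro e he
  simp only [starE, Finset.mem_image, Finset.mem_erase] at he
  obtain ⟨w, ⟨h1, h2⟩, rfl⟩ := he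
  rw [mem_allE]
  simpa using h1.symm

lemma starE_card {n : ℕ} (A : Finset (Fin n)) (v : Fin n) (hv : v ∈ A) :
    (starE A v).card = A.card - 1 := by
  unfold starE
  rw [Finset.card_image_of_injective, Finset.card_erase_of_mem hv]
  intro a b hab
  exact Sym2.congr_right.1 hab

lemma mem_ins {n : ℕ} (S : Finset (Fin n)) (e : Sym2 (Fin n)) :
    e ∈ ins S ↔ ∃ a ∈ S, ∃ b ∈ S, a ≠ b ∧ s(a, b) = e := by
  simp only [ins, Finset.mem_image, Finset.mem_offDiag, Prod.exists]
  constructor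
  · rintro ⟨a, b, ⟨h1, h2, h3⟩, rfl⟩
    exact ⟨a, h1, b, h2, h3, rfl⟩
  · rintro ⟨a, h1, b, h2, h3, rfl⟩
    exact ⟨a, b, ⟨h1, h2, h3⟩, rfl⟩

lemma ins_sub {n : ℕ} (S : Finset (Fin n)) : ins S ⊆ allE n := by
  intro e he
  rw [mem_ins] at he
  obtain ⟨a, h1, b, h2, h3, rfl⟩ := he
  rw [mem_allE]
  simpa using h3

lemma ins_card {n : ℕ} (S : Finset (Fin n)) : (ins S).card = S.card.choose 2 := by
  rw [← Sym2.card_image_offDiag S]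
  congr 1

/-- number of neighbours in `A` -/
noncomputable def dg {n : ℕ} (A : Finset (Fin n)) (H : SimpleGraph (Fin n)) (v : Fin n) : ℕ :=
  (A.filter (fun w => H.Adj v w)).card

/-- isolated vertices within `A` -/
noncomputable def iso {n : ℕ} (A : Finset (Fin n)) (H : SimpleGraph (Fin n)) : Finset (Fin n) :=
  A.filter (fun v => ∀ w ∈ A, ¬ H.Adj v w)

/-- cliques within `A` -/
noncomputable def clq {n : ℕ} (A : Finset (Fin n)) (t : ℕ) (H : SimpleGraph (Fin n)) :
    Finset (Finset (Fin n)) :=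
  (A.powersetCard t).filter (fun S => H.IsClique (S : Set (Fin n)))

lemma isClique_ind {n : ℕ} (H : SimpleGraph (Fin n)) (S : Finset (Fin n)) :
    (if H.IsClique (S : Set (Fin n)) then (1 : ℝ) else 0)
      = ∏ e ∈ ins S, (if e ∈ H.edgeSet then 1 else 0) := by
  rw [Finset.prod_boole]
  congr 1
  apply propext
  constructor
  · intro h e he
    rw [mem_ins] at he
    obtain ⟨a, h1, b, h2, h3, rfl⟩ := he
    exact h h1 h2 h3
  · intro h a ha b hb hab
    exact h s(a, b) ((mem_ins _ _).2 ⟨a, ha, b, hb, hab, rfl⟩)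

lemma iso_ind {n : ℕ} (H : SimpleGraph (Fin n)) (A : Finset (Fin n)) (v : Fin n) :
    (if ∀ w ∈ A, ¬ H.Adj v w then (1 : ℝ) else 0)
      = ∏ e ∈ starE A v, (if e ∈ H.edgeSet then 0 else 1) := by
  have : ∀ e, (if e ∈ H.edgeSet then (0:ℝ) else 1) = if ¬ e ∈ H.edgeSet then 1 else 0 := by
    intro e; split_ifs <;> simp_all
  simp_rw [this]
  rw [Finset.prod_boole]
  congr 1
  apply propext
  constructor
  · intro h e he
    simp only [starE, Finset.mem_image, Finset.mem_erase] at he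
    obtain ⟨w, ⟨h1, h2⟩, rfl⟩ := he
    exact h w h2
  · intro h w hw hvw
    exact h s(v, w) (Finset.mem_image_of_mem _ (Finset.mem_erase.2 ⟨hvw.ne', hw⟩)) hvw

lemma dg_ind {n : ℕ} (H : SimpleGraph (Fin n)) (A : Finset (Fin n)) (v : Fin n) :
    ((1 : ℝ) / 2) ^ dg A H v = ∏ e ∈ starE A v, (if e ∈ H.edgeSet then 1 / 2 else 1) := by
  unfold starE
  rw [Finset.prod_image (by intro a _ b _ hab; exact Sym2.congr_right.1 hab), ← Finset.prod_filter,
    Finset.prod_const]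
  congr 1
  unfold dg
  congr 1
  ext w
  simp only [Finset.mem_filter, Finset.mem_erase, SimpleGraph.mem_edgeSet]
  constructor
  · rintro ⟨h1, h2⟩; exact ⟨⟨h2.ne', h1⟩, h2⟩
  · rintro ⟨⟨h1, h2⟩, h3⟩; exact ⟨h2, h3⟩

lemma Ex_dg {n : ℕ} (p : ℝ) (A : Finset (Fin n)) (v : Fin n) (hv : v ∈ A) :
    Ex n p (fun H => ((1 : ℝ) / 2) ^ dg A H v) = (1 - p / 2) ^ (A.card - 1) := by
  simp_rw [dg_ind]
  rw [Ex_prod n p _ (starE_sub A v) (fun _ => 1 / 2) (fun _ => 1), Finset.prod_const,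
    starE_card A v hv]
  congr 1; ring

lemma clq_cast {n : ℕ} (A : Finset (Fin n)) (t : ℕ) (H : SimpleGraph (Fin n)) :
    ((clq A t H).card : ℝ) = ∑ S ∈ A.powersetCard t,
      if H.IsClique (S : Set (Fin n)) then (1 : ℝ) else 0 := by
  unfold clq
  rw [Finset.card_filter]
  push_cast
  rfl

lemma Ex_clq {n : ℕ} (p : ℝ) (A : Finset (Fin n)) (t : ℕ) (H₀ : SimpleGraph (Fin n)) :
    Ex n p (fun H => ((clq A t (H₀ ⊔ H)).card : ℝ))
      = ∑ S ∈ A.powersetCard t, ∏ e ∈ ins S, (if e ∈ H₀.edgeSet then 1 else p) := by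
  have : ∀ H, ((clq A t (H₀ ⊔ H)).card : ℝ) = ∑ S ∈ A.powersetCard t,
      ∏ e ∈ ins S, (if e ∈ H.edgeSet then 1 else (if e ∈ H₀.edgeSet then 1 else 0)) := by
    intro H
    obtain ⟨U, hU⟩ : ∃ U, U = H₀ ⊔ H := ⟨_, rfl⟩
    rw [← hU, clq_cast]
    refine Finset.sum_congr rfl fun S _ => ?_
    rw [isClique_ind]
    refine Finset.prod_congr rfl fun e _ => ?_
    have : e ∈ U.edgeSet ↔ e ∈ H₀.edgeSet ∨ e ∈ H.edgeSet := by
      rw [hU, SimpleGraph.edgeSet_sup, Set.mem_union]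
    by_cases h1 : e ∈ H.edgeSet <;> by_cases h2 : e ∈ H₀.edgeSet <;> simp [h1, h2, this]
  simp_rw [this]
  rw [Ex_sum]
  refine Finset.sum_congr rfl fun S _ => ?_
  rw [Ex_prod n p _ (ins_sub S) (fun _ => 1) (fun e => if e ∈ H₀.edgeSet then 1 else 0)]
  refine Finset.prod_congr rfl fun e _ => ?_
  split_ifs <;> ring

lemma Ex_clq_bot {n : ℕ} {p : ℝ} (h0 : 0 ≤ p) (A : Finset (Fin n)) (t : ℕ) :
    Ex n p (fun H => ((clq A t ((⊥ : SimpleGraph (Fin n)) ⊔ H)).card : ℝ))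
      ≤ (n : ℝ) ^ t * p ^ (t.choose 2) := by
  rw [Ex_clq]
  refine (Finset.sum_le_sum (g := fun _ => p ^ (t.choose 2)) ?_).trans ?_
  · intro S hS
    rw [Finset.mem_powersetCard] at hS
    simp [ins_card, hS.2]
  rw [Finset.sum_const, Finset.card_powersetCard, nsmul_eq_mul]
  gcongr
  calc ((A.card.choose t : ℕ) : ℝ) ≤ ((A.card ^ t : ℕ) : ℝ) := by
        exact_mod_cast Nat.choose_le_pow _ _
    _ ≤ (n : ℝ) ^ t := by
        push_cast
        gcongr
        simpa using Finset.card_le_univ A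

lemma Ex_Ex_clq {n : ℕ} {p : ℝ} (h0 : 0 ≤ p) (h1 : p ≤ 1) (A : Finset (Fin n)) (t : ℕ) :
    Ex n p (fun H₀ => Ex n p (fun H => ((clq A t (H₀ ⊔ H)).card : ℝ)))
      ≤ (n : ℝ) ^ t * (2 * p) ^ (t.choose 2) := by
  simp_rw [Ex_clq]
  rw [Ex_sum]
  have : ∀ S ∈ A.powersetCard t,
      Ex n p (fun H₀ => ∏ e ∈ ins S, (if e ∈ H₀.edgeSet then 1 else p))
        ≤ (2 * p) ^ (t.choose 2) := by
    intro S hS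
    rw [Finset.mem_powersetCard] at hS
    rw [Ex_prod n p _ (ins_sub S) (fun _ => 1) (fun _ => p), Finset.prod_const, ins_card, hS.2]
    apply pow_le_pow_left₀ <;> nlinarith
  refine (Finset.sum_le_sum this).trans ?_
  rw [Finset.sum_const, Finset.card_powersetCard, nsmul_eq_mul]
  gcongr
  calc ((A.card.choose t : ℕ) : ℝ) ≤ ((A.card ^ t : ℕ) : ℝ) := by
        exact_mod_cast Nat.choose_le_pow _ _
    _ ≤ (n : ℝ) ^ t := by
        push_cast
        gcongr
        simpa using Finset.card_le_univ A

lemma iso_cast {n : ℕ} (A : Finset (Fin n)) (H : SimpleGraph (Fin n)) :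
    ((iso A H).card : ℝ) = ∑ v ∈ A, ∏ e ∈ starE A v, (if e ∈ H.edgeSet then 0 else 1) := by
  unfold iso
  rw [Finset.card_filter]
  push_cast
  exact Finset.sum_congr rfl fun v _ => iso_ind H A v

lemma Ex_iso {n : ℕ} (p : ℝ) (A : Finset (Fin n)) :
    Ex n p (fun H => ((iso A H).card : ℝ)) = A.card * (1 - p) ^ (A.card - 1) := by
  simp_rw [iso_cast]
  rw [Ex_sum]
  have : ∀ v ∈ A, Ex n p (fun H => ∏ e ∈ starE A v, (if e ∈ H.edgeSet then 0 else 1))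
      = (1 - p) ^ (A.card - 1) := by
    intro v hv
    rw [Ex_prod n p _ (starE_sub A v) (fun _ => 0) (fun _ => 1), Finset.prod_const,
      starE_card A v hv]
    congr 1; ring
  rw [Finset.sum_congr rfl this, Finset.sum_const, nsmul_eq_mul]

lemma Ex_iso_pair {n : ℕ} {p : ℝ} (h0 : 0 ≤ p) (h1 : p ≤ 1) (A : Finset (Fin n)) (u v : Fin n)
    (hu : u ∈ A) (hv : v ∈ A) (huv : u ≠ v) :
    Ex n p (fun H => (∏ e ∈ starE A u, (if e ∈ H.edgeSet then 0 else 1))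
      * ∏ e ∈ starE A v, (if e ∈ H.edgeSet then 0 else 1)) ≤ (1 - p) ^ (2 * A.card - 3) := by
  have h : ∀ H : SimpleGraph (Fin n), (∏ e ∈ starE A u, (if e ∈ H.edgeSet then (0:ℝ) else 1))
      * ∏ e ∈ starE A v, (if e ∈ H.edgeSet then 0 else 1)
      = ∏ e ∈ starE A u ∪ starE A v, (if e ∈ H.edgeSet then 0 else 1) := by
    intro H
    have : ∀ e, (if e ∈ H.edgeSet then (0:ℝ) else 1) = if ¬ e ∈ H.edgeSet then 1 else 0 := by
      intro e; split_ifs <;> simp_all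
    simp_rw [this]
    rw [Finset.prod_boole, Finset.prod_boole, Finset.prod_boole, ite_zero_mul_ite_zero, one_mul]
    congr 1
    apply propext
    simp only [Finset.mem_union, or_imp, forall_and]
  simp_rw [h]
  rw [Ex_prod n p _ (Finset.union_subset (starE_sub A u) (starE_sub A v)) (fun _ => 0) (fun _ => 1),
    Finset.prod_const]
  have hc : 2 * A.card - 3 ≤ (starE A u ∪ starE A v).card := by
    have e1 := Finset.card_union_add_card_inter (starE A u) (starE A v)
    have e2 : (starE A u ∩ starE A v).card ≤ 1 := by
      rw [← Finset.card_singleton s(u, v)]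
      apply Finset.card_le_card
      intro e he
      simp only [starE, Finset.mem_inter, Finset.mem_image, Finset.mem_erase] at he
      obtain ⟨⟨w, _, rfl⟩, ⟨x, _, hx⟩⟩ := he
      rw [Finset.mem_singleton]
      rw [Sym2.eq_iff] at hx
      rcases hx with ⟨h, _⟩ | ⟨h, _⟩
      · exact absurd h.symm huv
      · rw [h]
    rw [starE_card A u hu, starE_card A v hv] at e1
    omega
  have : p * 0 + (1 - p) * 1 = 1 - p := by ring
  rw [this]
  exact pow_le_pow_of_le_one (by linarith) (by linarith) hc

lemma Ex_iso_sq {n : ℕ} {p : ℝ} (h0 : 0 ≤ p) (h1 : p ≤ 1) (A : Finset (Fin n)) :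
    Ex n p (fun H => ((iso A H).card : ℝ) ^ 2)
      ≤ A.card * (1 - p) ^ (A.card - 1) + (A.card : ℝ) ^ 2 * (1 - p) ^ (2 * A.card - 3) := by
  have hp : 0 ≤ 1 - p := by linarith
  simp_rw [iso_cast, sq, Finset.sum_mul_sum]
  rw [Ex_sum]
  have key : ∀ u ∈ A, Ex n p (fun H => ∑ v ∈ A, (∏ e ∈ starE A u, (if e ∈ H.edgeSet then 0 else 1))
      * ∏ e ∈ starE A v, (if e ∈ H.edgeSet then 0 else 1))
      ≤ (1 - p) ^ (A.card - 1) + A.card * (1 - p) ^ (2 * A.card - 3) := by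
    intro u hu
    rw [Ex_sum, ← Finset.add_sum_erase A _ hu]
    have hd : Ex n p (fun H => (∏ e ∈ starE A u, (if e ∈ H.edgeSet then 0 else 1))
      * ∏ e ∈ starE A u, (if e ∈ H.edgeSet then 0 else 1)) = (1 - p) ^ (A.card - 1) := by
      simp_rw [← Finset.prod_mul_distrib]
      have : ∀ H : SimpleGraph (Fin n), ∏ e ∈ starE A u, ((if e ∈ H.edgeSet then (0:ℝ) else 1) *
          (if e ∈ H.edgeSet then (0:ℝ) else 1)) = ∏ e ∈ starE A u, (if e ∈ H.edgeSet then 0 else 1) := by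
        intro H
        refine Finset.prod_congr rfl fun e _ => ?_
        split_ifs <;> simp
      simp_rw [this]
      rw [Ex_prod n p _ (starE_sub A u) (fun _ => 0) (fun _ => 1), Finset.prod_const,
        starE_card A u hu]
      congr 1; ring
    refine add_le_add hd.le ?_
    refine (Finset.sum_le_card_nsmul _ _ ((1 - p) ^ (2 * A.card - 3)) ?_).trans ?_
    · intro v hv
      rw [Finset.mem_erase] at hv
      exact Ex_iso_pair h0 h1 A u v hu hv.2 hv.1.symm
    · rw [nsmul_eq_mul]
      gcongr
      exact Finset.erase_subset _ _
  refine (Finset.sum_le_card_nsmul _ _ _ key).trans (le_of_eq ?_)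
  rw [nsmul_eq_mul]
  ring

/-- The extremal graph. -/
def Gof {n : ℕ} (A : Finset (Fin n)) (H : SimpleGraph (Fin n)) : SimpleGraph (Fin n) where
  Adj u v := u ≠ v ∧ (u ∈ A → v ∈ A → H.Adj u v)
  symm := ⟨fun _ _ h => ⟨h.1.symm, fun h1 h2 => (h.2 h2 h1).symm⟩⟩
  loopless := ⟨fun _ h => h.1 rfl⟩

lemma degR_Gof {n : ℕ} (A : Finset (Fin n)) (H : SimpleGraph (Fin n)) (v : Fin n) :
    degR (Gof A H) v = (Finset.univ.filter (fun w => (Gof A H).Adj v w)).card := by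
  unfold degR
  rw [Nat.card_eq_fintype_card, ← Set.toFinset_card]
  congr 1
  ext w
  simp

lemma degR_in {n : ℕ} (A : Finset (Fin n)) (H : SimpleGraph (Fin n)) (v : Fin n) (hv : v ∈ A) :
    n ≤ degR (Gof A H) v + A.card - dg A H v + 0 ∧ n + dg A H v ≤ degR (Gof A H) v + A.card := by
  have h : n + dg A H v ≤ degR (Gof A H) v + A.card := by
    rw [degR_Gof]
    unfold dg
    have h1 : Aᶜ ∪ A.filter (fun w => H.Adj v w) ⊆
        Finset.univ.filter (fun w => (Gof A H).Adj v w) := by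
      intro w hw
      rw [Finset.mem_union, Finset.mem_compl, Finset.mem_filter] at hw
      rw [Finset.mem_filter]
      refine ⟨Finset.mem_univ _, ?_⟩
      rcases hw with hw | hw
      · exact ⟨fun h => hw (h ▸ hv), fun _ h => absurd h hw⟩
      · exact ⟨hw.2.ne, fun _ _ => hw.2⟩
    have h2 := Finset.card_le_card h1
    rw [Finset.card_union_of_disjoint, Finset.card_compl, Fintype.card_fin] at h2
    · have := Finset.card_le_univ A
      rw [Fintype.card_fin] at this
      omega
    · rw [Finset.disjoint_left]
      intro w hw hw'
      exact (Finset.mem_compl.1 hw) (Finset.mem_filter.1 hw').1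
  exact ⟨by omega, h⟩

lemma degR_out {n : ℕ} (A : Finset (Fin n)) (H : SimpleGraph (Fin n)) (v : Fin n) (hv : v ∉ A) :
    n ≤ degR (Gof A H) v + 1 := by
  rw [degR_Gof]
  have h1 : Finset.univ.erase v ⊆ Finset.univ.filter (fun w => (Gof A H).Adj v w) := by
    intro w hw
    rw [Finset.mem_erase] at hw
    rw [Finset.mem_filter]
    exact ⟨Finset.mem_univ _, hw.1.symm, fun h => absurd h hv⟩
  have h2 := Finset.card_le_card h1
  rw [Finset.card_erase_of_mem (Finset.mem_univ _), Finset.card_univ, Fintype.card_fin] at h2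
  omega

lemma factor_bound {n r s m : ℕ} (hn : n = r * m) (hs : 1 < s) (hr : 0 < r) (A : Finset (Fin n))
    (H₀ H : SimpleGraph (Fin n)) (hf : HasCliqueFactor (Gof A H₀ ⊔ H) r) :
    A.card + (iso A (H₀ ⊔ H)).card ≤ s * m + r * (clq A (s + 1) (H₀ ⊔ H)).card := by
  obtain ⟨P, hP⟩ := hf
  obtain ⟨U, hU⟩ : ∃ U, U = H₀ ⊔ H := ⟨_, rfl⟩
  rw [← hU]
  have hm : P.parts.card = m := by
    have h1 := P.sum_card_parts
    rw [Finset.sum_congr rfl (fun c hc => (hP c hc).card_eq), Finset.sum_const, Finset.card_univ,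
      Fintype.card_fin, smul_eq_mul, mul_comm] at h1
    exact Nat.eq_of_mul_eq_mul_left hr (h1.trans hn)
  have split : ∀ B : Finset (Fin n), B.card = ∑ c ∈ P.parts, (c ∩ B).card := by
    intro B
    rw [← Finset.card_biUnion]
    · congr 1
      ext x
      simp only [Finset.mem_biUnion, Finset.mem_inter]
      constructor
      · intro hx
        obtain ⟨c, hc, hxc⟩ := P.exists_mem (Finset.mem_univ x)
        exact ⟨c, hc, hxc, hx⟩
      · rintro ⟨c, _, _, h⟩; exact h
    · intro c hc d hd hcd
      exact (P.disjoint hc hd hcd).mono Finset.inter_subset_left Finset.inter_subset_left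
  have hcl : ∀ c ∈ P.parts, ∀ x ∈ c ∩ A, ∀ y ∈ c ∩ A, x ≠ y → U.Adj x y := by
    intro c hc x hx y hy hxy
    rw [Finset.mem_inter] at hx hy
    have := (hP c hc).isClique hx.1 hy.1 hxy
    rw [SimpleGraph.sup_adj] at this
    rw [hU, SimpleGraph.sup_adj]
    exact this.imp (fun h => h.2 hx.2 hy.2) id
  set big := P.parts.filter (fun c => s + 1 ≤ (c ∩ A).card) with hbig
  have hb : big.card ≤ (clq A (s + 1) U).card := by
    have : ∀ c, ∃ S, c ∈ big → S ⊆ c ∩ A ∧ S.card = s + 1 := by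
      intro c
      by_cases hc : c ∈ big
      · obtain ⟨S, h1, h2⟩ := Finset.exists_subset_card_eq (Finset.mem_filter.1 hc).2
        exact ⟨S, fun _ => ⟨h1, h2⟩⟩
      · exact ⟨∅, fun h => absurd h hc⟩
    choose f hf using this
    refine Finset.card_le_card_of_injOn f ?_ ?_
    · intro c hc
      obtain ⟨h1, h2⟩ := hf c hc
      have hc' := (Finset.mem_filter.1 hc).1
      rw [Finset.mem_coe]
      unfold clq
      rw [Finset.mem_filter, Finset.mem_powersetCard]
      refine ⟨⟨h1.trans Finset.inter_subset_right, h2⟩, ?_⟩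
      intro x hx y hy hxy
      exact hcl c hc' x (h1 hx) y (h1 hy) hxy
    · intro c hc d hd hcd
      obtain ⟨h1, h2⟩ := hf c hc
      obtain ⟨h3, h4⟩ := hf d hd
      by_contra hne
      have hdis := P.disjoint (Finset.mem_filter.1 hc).1 (Finset.mem_filter.1 hd).1 hne
      obtain ⟨x, hx⟩ := Finset.card_pos.1 (by omega : 0 < (f c).card)
      exact Finset.disjoint_left.1 hdis (Finset.mem_inter.1 (h1 hx)).1
        (Finset.mem_inter.1 (h3 (hcd ▸ hx))).1
  have hper : ∀ c ∈ P.parts, (c ∩ A).card + (c ∩ iso A U).card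
      ≤ s + if s + 1 ≤ (c ∩ A).card then r else 0 := by
    intro c hc
    have hsub : c ∩ iso A U ⊆ c ∩ A :=
      Finset.inter_subset_inter_left (Finset.filter_subset _ _)
    have h1 := Finset.card_le_card hsub
    have h2 : (c ∩ A).card ≤ r := by
      rw [← (hP c hc).card_eq]
      exact Finset.card_le_card Finset.inter_subset_left
    have h3 : 2 ≤ (c ∩ A).card → (c ∩ iso A U).card = 0 := by
      intro h
      rw [Finset.card_eq_zero, Finset.eq_empty_iff_forall_notMem]
      intro x hx
      obtain ⟨y, hy, hyx⟩ := Finset.exists_mem_ne (by omega : 1 < (c ∩ A).card) x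
      have hi := (Finset.mem_inter.1 hx).2
      unfold iso at hi
      exact (Finset.mem_filter.1 hi).2 y (Finset.mem_inter.1 hy).2
        (hcl c hc x (hsub hx) y hy hyx.symm)
    split_ifs <;> omega
  have hsum := Finset.sum_le_sum hper
  rw [Finset.sum_add_distrib, Finset.sum_add_distrib, ← split, ← split, Finset.sum_const,
    ← Finset.sum_filter, Finset.sum_const, hm, smul_eq_mul, smul_eq_mul] at hsum
  have : big.card * r ≤ r * (clq A (s + 1) U).card := by
    rw [mul_comm]; exact Nat.mul_le_mul_left _ hb
  rw [mul_comm s m]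
  exact hsum.trans (by simpa [hbig] using this)

lemma exists_card {n a : ℕ} (h : a ≤ n) : ∃ A : Finset (Fin n), A.card = a := by
  obtain ⟨A, _, hA⟩ := Finset.exists_subset_card_eq (s := (Finset.univ : Finset (Fin n))) (n := a)
    (by simpa using h)
  exact ⟨A, hA⟩

lemma Pr_two {n r m : ℕ} (hn : n = r * m) (hr : 2 < r) (hm : 0 < m) {p : ℝ} (h0 : 0 ≤ p)
    (h1 : p ≤ 1 / 2) (A : Finset (Fin n)) (hA : A.card = 2 * m) (μ : ℝ)
    (hμ : μ = (A.card : ℝ) * (1 - p) ^ (A.card - 1)) :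
    Pr n p (fun H => HasCliqueFactor (Gof A ⊥ ⊔ H) r)
      ≤ 4 / μ + 8 * p + 2 * r / μ * ((n : ℝ) ^ 3 * p ^ 3) := by
  have hp : 0 < 1 - p := by linarith
  have hm' : (0 : ℝ) < A.card := by rw [hA]; exact_mod_cast (by omega)
  have hμ0 : 0 < μ := by rw [hμ]; positivity
  rw [Pr_eq]
  have point : ∀ H : SimpleGraph (Fin n),
      (if HasCliqueFactor (Gof A ⊥ ⊔ H) r then (1 : ℝ) else 0) ≤
      4 / μ ^ 2 * (((iso A H).card : ℝ) ^ 2 + ((-2 * μ) * ((iso A H).card : ℝ) + μ ^ 2 * 1))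
        + 2 * r / μ * ((clq A (2 + 1) (⊥ ⊔ H)).card : ℝ) := by
    intro H
    have hsq : ((iso A H).card : ℝ) ^ 2 + ((-2 * μ) * ((iso A H).card : ℝ) + μ ^ 2 * 1)
        = (((iso A H).card : ℝ) - μ) ^ 2 := by ring
    rw [hsq]
    split_ifs with hf
    · have hb := factor_bound hn (by norm_num : 1 < 2) (by omega) A ⊥ H hf
      rw [hA] at hb
      have hb' : ((iso A H).card : ℝ) ≤ r * ((clq A (2 + 1) (⊥ ⊔ H)).card : ℝ) := by
        rw [bot_sup_eq] at hb ⊢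
        exact_mod_cast (by omega : (iso A H).card ≤ r * (clq A (2 + 1) H).card)
      by_cases hI : ((iso A H).card : ℝ) ≤ μ / 2
      · have : 1 ≤ 4 / μ ^ 2 * (((iso A H).card : ℝ) - μ) ^ 2 := by
          rw [div_mul_eq_mul_div, le_div_iff₀ (by positivity)]
          nlinarith
        have h2 : 0 ≤ 2 * r / μ * ((clq A (2 + 1) (⊥ ⊔ H)).card : ℝ) := by positivity
        linarith
      · have : 1 ≤ 2 * r / μ * ((clq A (2 + 1) (⊥ ⊔ H)).card : ℝ) := by
          rw [div_mul_eq_mul_div, le_div_iff₀ (by positivity)]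
          push Not at hI
          nlinarith
        have h2 : 0 ≤ 4 / μ ^ 2 * (((iso A H).card : ℝ) - μ) ^ 2 := by positivity
        linarith
    · positivity
  refine (Ex_mono h0 (by linarith) point).trans ?_
  rw [Ex_add, Ex_smul, Ex_smul, Ex_add, Ex_add, Ex_smul, Ex_smul, Ex_one, Ex_iso, ← hμ]
  have hc := Ex_clq_bot h0 A (2 + 1)
  have hch : (2 + 1 : ℕ).choose 2 = 3 := by decide
  rw [hch] at hc
  have hsq := Ex_iso_sq h0 (by linarith) A
  rw [← hμ] at hsq
  have hpow : (A.card : ℝ) ^ 2 * (1 - p) ^ (2 * A.card - 3) * (1 - p) = μ ^ 2 := by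
    rw [hμ, mul_pow, ← pow_mul, mul_assoc, ← pow_succ]
    congr 2
    omega
  have hle : (A.card : ℝ) ^ 2 * (1 - p) ^ (2 * A.card - 3) ≤ μ ^ 2 * (1 + 2 * p) := by
    rw [← hpow]
    set X := (A.card : ℝ) ^ 2 * (1 - p) ^ (2 * A.card - 3)
    have hX : 0 ≤ X := by positivity
    have : 0 ≤ X * (p * (1 - 2 * p)) := mul_nonneg hX (mul_nonneg h0 (by linarith))
    nlinarith
  have e1 : 4 / μ ^ 2 * (Ex n p (fun H => ((iso A H).card : ℝ) ^ 2) + (-2 * μ * μ + μ ^ 2 * 1))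
      ≤ 4 / μ ^ 2 * (μ + 2 * p * μ ^ 2) := by
    refine mul_le_mul_of_nonneg_left ?_ (by positivity)
    nlinarith
  have e2 : 4 / μ ^ 2 * (μ + 2 * p * μ ^ 2) = 4 / μ + 8 * p := by
    field_simp
    ring
  have e3 : 2 * r / μ * Ex n p (fun H => ((clq A (2 + 1) ((⊥ : SimpleGraph (Fin n)) ⊔ H)).card : ℝ))
      ≤ 2 * r / μ * ((n : ℝ) ^ 3 * p ^ 3) := by
    gcongr
  linarith

lemma exists_three {n r s m k : ℕ} (hn : n = r * m) (hs : 1 < s) (hr : 0 < r) (hk : 0 < k)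
    {p ε : ℝ} (h0 : 0 ≤ p) (h1 : p ≤ 1) (hε : 0 < ε) (A : Finset (Fin n))
    (hA : A.card = s * m + k)
    (h : (n : ℝ) * (2 ^ k * (1 - p / 2) ^ (A.card - 1))
      + r / (k * ε) * ((n : ℝ) ^ (s + 1) * (2 * p) ^ ((s + 1).choose 2)) < 1) :
    ∃ H₀ : SimpleGraph (Fin n), (∀ v ∈ A, k ≤ dg A H₀ v) ∧
      Pr n p (fun H => HasCliqueFactor (Gof A H₀ ⊔ H) r) < ε := by
  by_contra hcon
  push Not at hcon
  have hk' : (0 : ℝ) < k := by exact_mod_cast hk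
  have point : ∀ H₀ : SimpleGraph (Fin n), (1 : ℝ) ≤ ∑ v ∈ A, 2 ^ k * ((1 : ℝ) / 2) ^ dg A H₀ v
      + r / (k * ε) * Ex n p (fun H => ((clq A (s + 1) (H₀ ⊔ H)).card : ℝ)) := by
    intro H₀
    have hE : 0 ≤ Ex n p (fun H => ((clq A (s + 1) (H₀ ⊔ H)).card : ℝ)) :=
      Finset.sum_nonneg fun H _ => mul_nonneg (wt_nonneg h0 h1 H) (by positivity)
    by_cases hd : ∀ v ∈ A, k ≤ dg A H₀ v
    · have h2 := hcon H₀ hd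
      rw [Pr_eq] at h2
      have h3 : Ex n p (fun H => if HasCliqueFactor (Gof A H₀ ⊔ H) r then (1 : ℝ) else 0)
          ≤ Ex n p (fun H => r / k * ((clq A (s + 1) (H₀ ⊔ H)).card : ℝ)) := by
        apply Ex_mono h0 h1
        intro H
        split_ifs with hf
        · have hb := factor_bound hn hs hr A H₀ H hf
          rw [hA] at hb
          have : (k : ℝ) ≤ r * ((clq A (s + 1) (H₀ ⊔ H)).card : ℝ) := by
            exact_mod_cast (by omega : k ≤ r * (clq A (s + 1) (H₀ ⊔ H)).card)
          rw [div_mul_eq_mul_div, le_div_iff₀ hk']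
          linarith
        · positivity
      rw [Ex_smul] at h3
      have h4 := h2.trans h3
      have h5 : (1 : ℝ) ≤ r / (k * ε) * Ex n p (fun H => ((clq A (s + 1) (H₀ ⊔ H)).card : ℝ)) := by
        rw [div_mul_eq_mul_div, le_div_iff₀ hk'] at h4
        rw [div_mul_eq_mul_div, le_div_iff₀ (by positivity)]
        linarith
      have h6 : 0 ≤ ∑ v ∈ A, 2 ^ k * ((1 : ℝ) / 2) ^ dg A H₀ v := by positivity
      linarith
    · push Not at hd
      obtain ⟨v, hv, hvk⟩ := hd
      have h2 : (1 : ℝ) ≤ 2 ^ k * ((1 : ℝ) / 2) ^ dg A H₀ v := by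
        rw [one_div, inv_pow, ← div_eq_mul_inv, le_div_iff₀ (by positivity), one_mul]
        exact pow_le_pow_right₀ (by norm_num) hvk.le
      have h3 := Finset.single_le_sum (f := fun v => 2 ^ k * ((1 : ℝ) / 2) ^ dg A H₀ v)
        (fun i _ => by positivity) hv
      have h4 : 0 ≤ r / (k * ε) * Ex n p (fun H => ((clq A (s + 1) (H₀ ⊔ H)).card : ℝ)) := by
        positivity
      linarith
  have h2 := Ex_mono h0 h1 point
  rw [Ex_one, Ex_add, Ex_smul, Ex_sum] at h2
  have h3 : ∑ v ∈ A, Ex n p (fun H₀ => 2 ^ k * ((1 : ℝ) / 2) ^ dg A H₀ v)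
      ≤ (n : ℝ) * (2 ^ k * (1 - p / 2) ^ (A.card - 1)) := by
    rw [Finset.sum_congr rfl (g := fun _ => 2 ^ k * (1 - p / 2) ^ (A.card - 1))]
    · rw [Finset.sum_const, nsmul_eq_mul]
      have : 0 ≤ 1 - p / 2 := by linarith
      gcongr
      simpa using Finset.card_le_univ A
    · intro v hv
      rw [Ex_smul, Ex_dg p A v hv]
  have h4 : r / (k * ε) * Ex n p (fun H₀ => Ex n p (fun H => ((clq A (s + 1) (H₀ ⊔ H)).card : ℝ)))
      ≤ r / (k * ε) * ((n : ℝ) ^ (s + 1) * (2 * p) ^ ((s + 1).choose 2)) := by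
    gcongr
    exact Ex_Ex_clq h0 h1 A (s + 1)
  linarith

lemma case_two (r : ℕ) (hr : 2 < r) (ε : ℝ) (hε : 0 < ε) :
    ∃ n₀ : ℕ, ∀ n : ℕ, n₀ ≤ n → r ∣ n →
      ∃ G : SimpleGraph (Fin n),
        (∀ v, (1 - (2 : ℝ) / (r : ℝ)) * n ≤ (degR G v : ℝ)) ∧
        Pr n (1 / 4 * (Real.log n / n)) (fun H => HasCliqueFactor (G ⊔ H) r) < ε := by
  have hr0 : (0 : ℝ) < r := by exact_mod_cast (by omega)
  have t0 : Filter.Tendsto (fun x : ℝ => 4 * r * (x ^ (1 / 2 : ℝ))⁻¹ + 2 * (Real.log x / x)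
      + r ^ 2 / 32 * (Real.log x ^ (3 : ℝ) / x ^ (1 / 2 : ℝ))) Filter.atTop (nhds 0) := by
    have a1 := (tendsto_rpow_atTop (by norm_num : (0 : ℝ) < 1 / 2)).inv_tendsto_atTop
    have a2 := (Real.isLittleO_log_id_atTop).tendsto_div_nhds_zero
    have a3 := (isLittleO_log_rpow_rpow_atTop 3 (by norm_num : (0 : ℝ) < 1 / 2)).tendsto_div_nhds_zero
    have := ((a1.const_mul (4 * (r : ℝ))).add (a2.const_mul 2)).add (a3.const_mul ((r : ℝ) ^ 2 / 32))
    simpa using this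
  have t1 := (t0.eventually_lt_const hε).and (((Real.isLittleO_log_id_atTop).tendsto_div_nhds_zero.eventually_lt_const
    (by norm_num : (0 : ℝ) < 1)).and (Filter.eventually_ge_atTop 3))
  obtain ⟨n₀, hn₀⟩ := Filter.eventually_atTop.1 (tendsto_natCast_atTop_atTop.eventually t1)
  refine ⟨n₀, fun n hn hrn => ?_⟩
  obtain ⟨b1, b2, b3⟩ := hn₀ n hn
  simp only [id] at b2
  obtain ⟨m, hm⟩ := hrn
  have hn3 : 3 ≤ n := by exact_mod_cast b3
  have hm0 : 0 < m := by
    rcases Nat.eq_zero_or_pos m with h | h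
    · subst h; omega
    · exact h
  have h2m : 2 * m ≤ n := by rw [hm]; exact Nat.mul_le_mul_right _ hr.le
  obtain ⟨A, hA⟩ := exists_card h2m
  have hnpos : (0 : ℝ) < n := by linarith
  have hmr : (n : ℝ) = r * m := by exact_mod_cast hm
  have hm1 : (1 : ℝ) ≤ m := by exact_mod_cast hm0
  have hlog : 0 ≤ Real.log n := Real.log_nonneg (by linarith)
  refine ⟨Gof A ⊥, ?_, ?_⟩
  · intro v
    have hL : (1 - (2 : ℝ) / (r : ℝ)) * n = n - 2 * m := by
      rw [hmr]; field_simp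
    rw [hL]
    by_cases hv : v ∈ A
    · have := (degR_in A ⊥ v hv).2
      rw [hA] at this
      have h' : (n : ℝ) ≤ degR (Gof A ⊥) v + 2 * m := by
        exact_mod_cast (by omega : n ≤ degR (Gof A ⊥) v + 2 * m)
      linarith
    · have h' : (n : ℝ) ≤ degR (Gof A ⊥) v + 1 := by exact_mod_cast degR_out A ⊥ v hv
      linarith
  · set p : ℝ := 1 / 4 * (Real.log n / n) with hp
    have hp0 : 0 ≤ p := by positivity
    have hp1 : p ≤ 1 / 2 := by rw [hp]; linarith
    refine (Pr_two hm hr hm0 hp0 hp1 A hA _ rfl).trans_lt ?_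
    set μ : ℝ := (A.card : ℝ) * (1 - p) ^ (A.card - 1) with hμ
    set x : ℝ := (n : ℝ) ^ (1 / 2 : ℝ) with hx
    have hx0 : 0 < x := by positivity
    have hxx : x * x = n := by
      rw [hx, ← Real.rpow_add hnpos]; norm_num
    have hpn : p * n = Real.log n / 4 := by rw [hp]; field_simp
    have hexp : Real.exp (-(2 * p)) ≤ 1 - p := by
      rw [Real.exp_neg, inv_le_iff_one_le_mul₀ (Real.exp_pos _)]
      have := Real.add_one_le_exp (2 * p)
      nlinarith
    have hpow : x⁻¹ ≤ (1 - p) ^ (A.card - 1) := by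
      have e1 : (1 - p) ^ n ≤ (1 - p) ^ (A.card - 1) :=
        pow_le_pow_of_le_one (by linarith) (by linarith) (by omega)
      have e2 : Real.exp (-(2 * p)) ^ n ≤ (1 - p) ^ n :=
        pow_le_pow_left₀ (Real.exp_pos _).le hexp n
      have e3 : Real.exp (-(2 * p)) ^ n = x⁻¹ := by
        rw [← Real.exp_nat_mul, hx, ← Real.rpow_neg hnpos.le, Real.rpow_def_of_pos hnpos]
        congr 1
        linarith
      linarith
    have hμx : x / r ≤ μ := by
      have : x / r ≤ (2 * m : ℝ) * x⁻¹ := by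
        rw [div_le_iff₀ hr0]
        have : (2 * m : ℝ) * x⁻¹ * r = 2 * x := by
          have : (2 * m : ℝ) * x⁻¹ * r = 2 * (x * x) * x⁻¹ := by rw [hxx, hmr]; ring
          rw [this]; field_simp
        linarith
      refine this.trans ?_
      rw [hμ, hA]
      push_cast
      gcongr
      rw [hA] at hpow; exact hpow
    have hμi : μ⁻¹ ≤ r * x⁻¹ := by
      have := inv_anti₀ (by positivity) hμx
      rw [inv_div] at this
      rwa [← div_eq_mul_inv]
    have c1 : 4 / μ ≤ 4 * r * x⁻¹ := by
      rw [div_eq_mul_inv]; linarith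
    have c2 : 8 * p = 2 * (Real.log n / n) := by rw [hp]; ring
    have c3 : 2 * r / μ * ((n : ℝ) ^ 3 * p ^ 3) ≤ r ^ 2 / 32 * (Real.log n ^ (3 : ℝ) / x) := by
      have : (n : ℝ) ^ 3 * p ^ 3 = Real.log n ^ 3 / 64 := by
        rw [← mul_pow, mul_comm, hpn]; ring
      rw [this]
      have e : Real.log n ^ (3 : ℝ) = Real.log n ^ 3 := by
        exact_mod_cast Real.rpow_natCast (Real.log n) 3
      rw [e]
      calc 2 * r / μ * (Real.log n ^ 3 / 64) = 2 * r * (Real.log n ^ 3 / 64) * μ⁻¹ := by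
            rw [div_eq_mul_inv]; ring
        _ ≤ 2 * r * (Real.log n ^ 3 / 64) * (r * x⁻¹) := by gcongr
        _ = _ := by rw [div_eq_mul_inv (Real.log n ^ 3) x]; ring
    linarith

set_option maxHeartbeats 1000000 in
lemma case_three (r s : ℕ) (hs : 3 ≤ s) (hsr : s < r) (ε : ℝ) (hε : 0 < ε) :
    ∃ c : ℝ, 0 < c ∧ ∃ n₀ : ℕ, ∀ n : ℕ, n₀ ≤ n → r ∣ n →
      ∃ G : SimpleGraph (Fin n),
        (∀ v, (1 - (s : ℝ) / (r : ℝ)) * n ≤ (degR G v : ℝ)) ∧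
        Pr n (c * (n : ℝ) ^ (-(2 * (s : ℝ)) / (((s : ℝ) - 1) * ((s : ℝ) + 2))))
          (fun H => HasCliqueFactor (G ⊔ H) r) < ε := by
  have hr0 : (0 : ℝ) < r := by exact_mod_cast (by omega)
  have hs3 : (3 : ℝ) ≤ s := by exact_mod_cast hs
  set c : ℝ := min (1 / 2) (ε / (128 * r ^ 2)) with hc
  have hc0 : 0 < c := by rw [hc]; positivity
  have hc1 : c ≤ 1 / 2 := min_le_left _ _
  have hc2 : c * (128 * r ^ 2) ≤ ε := by
    rw [← le_div_iff₀ (by positivity)]; exact min_le_right _ _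
  set φ : ℝ := 2 * (s : ℝ) / (((s : ℝ) - 1) * ((s : ℝ) + 2)) with hφ
  have hden : 0 < ((s : ℝ) - 1) * ((s : ℝ) + 2) := by nlinarith
  have hφ0 : 0 < φ := by rw [hφ]; positivity
  have hφ1 : φ < 1 := by rw [hφ, div_lt_one hden]; nlinarith
  have hδ : 0 < 1 - φ := by linarith
  have hneg : -(2 * (s : ℝ)) / (((s : ℝ) - 1) * ((s : ℝ) + 2)) = -φ := by rw [hφ, neg_div]
  rw [hneg]
  refine ⟨c, hc0, ?_⟩
  have t1 : Filter.Tendsto (fun x : ℝ => x * Real.exp (-(c / (4 * r)) * x ^ (1 - φ)))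
      Filter.atTop (nhds 0) := by
    have a1 := (tendsto_rpow_mul_exp_neg_mul_atTop_nhds_zero (1 / (1 - φ)) (c / (4 * r))
      (by positivity)).comp (tendsto_rpow_atTop hδ)
    refine a1.congr' ?_
    filter_upwards [Filter.eventually_gt_atTop 0] with x hx
    simp only [Function.comp]
    rw [← Real.rpow_mul hx.le, mul_one_div_cancel hδ.ne', Real.rpow_one]
  have t2 := (tendsto_rpow_atTop hδ).eventually_ge_atTop (4 * r / c)
  have t3 := (t1.eventually_lt_const (by norm_num : (0 : ℝ) < 1 / 2)).and
    (t2.and (Filter.eventually_ge_atTop 1))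
  obtain ⟨n₀, hn₀⟩ := Filter.eventually_atTop.1 (tendsto_natCast_atTop_atTop.eventually t3)
  refine ⟨n₀, fun n hn hrn => ?_⟩
  obtain ⟨b1, b2, b3⟩ := hn₀ n hn
  obtain ⟨m, hm⟩ := hrn
  have hn1 : 1 ≤ n := by exact_mod_cast b3
  have hm0 : 0 < m := by
    rcases Nat.eq_zero_or_pos m with h | h
    · subst h; omega
    · exact h
  have hnpos : (0 : ℝ) < n := by linarith
  have hmr : (n : ℝ) = r * m := by exact_mod_cast hm
  have hm1 : (1 : ℝ) ≤ m := by exact_mod_cast hm0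
  set y : ℝ := (n : ℝ) ^ (-φ) with hy
  have hy0 : 0 < y := by positivity
  have hy1 : y ≤ 1 := Real.rpow_le_one_of_one_le_of_nonpos b3 (by linarith)
  set p : ℝ := c * y with hp
  have hp0 : 0 < p := by positivity
  have hp1 : p ≤ 1 := by nlinarith
  have hyn : (n : ℝ) ^ (1 - φ) = y * n := by
    rw [sub_eq_add_neg, Real.rpow_add hnpos, Real.rpow_one, mul_comm]
  rw [hyn] at b1 b2
  rw [div_le_iff₀ hc0] at b2
  set X : ℝ := p * n / (4 * r) with hX
  have hX1 : 1 ≤ X := by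
    rw [hX, le_div_iff₀ (by positivity), hp]; linarith
  set k : ℕ := ⌊X⌋₊ with hk
  have hkX : (k : ℝ) ≤ X := Nat.floor_le (by linarith)
  have hk0 : 0 < k := Nat.floor_pos.2 hX1
  have hkX2 : X / 2 ≤ k := by
    have := Nat.lt_floor_add_one X
    have h1 : (1 : ℝ) ≤ k := by exact_mod_cast hk0
    rw [← hk] at this
    linarith
  have hkm : k ≤ m := by
    have : (k : ℝ) ≤ m := by
      refine hkX.trans ?_
      rw [hX, div_le_iff₀ (by positivity), hmr]
      have : (0 : ℝ) < r * m := by positivity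
      nlinarith
    exact_mod_cast this
  have hle : s * m + k ≤ n := by
    rw [hm]
    calc s * m + k ≤ s * m + m := by omega
      _ = (s + 1) * m := by ring
      _ ≤ r * m := Nat.mul_le_mul_right _ hsr
  obtain ⟨A, hA⟩ := exists_card hle
  have key : (n : ℝ) * (2 ^ k * (1 - p / 2) ^ (A.card - 1))
      + r / (k * ε) * ((n : ℝ) ^ (s + 1) * (2 * p) ^ ((s + 1).choose 2)) < 1 := by
    have k1 : (n : ℝ) * (2 ^ k * (1 - p / 2) ^ (A.card - 1)) < 1 / 2 := by
      refine lt_of_le_of_lt ?_ b1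
      have e1 : (2 : ℝ) ^ k ≤ Real.exp X := by
        calc (2 : ℝ) ^ k ≤ Real.exp 1 ^ k := by
              gcongr
              have := Real.add_one_le_exp (1 : ℝ)
              linarith
          _ = Real.exp k := by rw [← Real.exp_nat_mul, mul_one]
          _ ≤ Real.exp X := Real.exp_le_exp.2 hkX
      have e2 : (1 - p / 2) ^ (A.card - 1) ≤ Real.exp (-(2 * X)) := by
        calc (1 - p / 2) ^ (A.card - 1) ≤ (1 - p / 2) ^ m := by
              apply pow_le_pow_of_le_one (by linarith) (by linarith)
              rw [hA]
              have : 3 * m ≤ s * m := Nat.mul_le_mul_right _ hs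
              omega
          _ ≤ Real.exp (-(p / 2)) ^ m := by
              apply pow_le_pow_left₀ (by linarith)
              have := Real.add_one_le_exp (-(p / 2))
              linarith
          _ = Real.exp (-(2 * X)) := by
              rw [← Real.exp_nat_mul, hX, hmr]
              congr 1
              field_simp
              ring
      have e3 : Real.exp (-(c / (4 * r)) * (y * n)) = Real.exp X * Real.exp (-(2 * X)) := by
        rw [← Real.exp_add, hX, hp]
        congr 1
        field_simp
        ring
      rw [e3]
      have : 0 ≤ (1 - p / 2) := by linarith
      gcongr
    have k2 : r / (k * ε) * ((n : ℝ) ^ (s + 1) * (2 * p) ^ ((s + 1).choose 2)) ≤ 1 / 4 := by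
      obtain ⟨e, he⟩ : ∃ e, (s + 1).choose 2 = e + 2 := by
        have : (3 + 1).choose 2 ≤ (s + 1).choose 2 := Nat.choose_le_choose 2 (by omega)
        have h6 : (3 + 1).choose 2 = 6 := by decide
        exact ⟨(s + 1).choose 2 - 2, by omega⟩
      have her : ((e : ℝ) + 1) = ((s : ℝ) - 1) * (s + 2) / 2 := by
        have h := Nat.cast_choose_two ℝ (s + 1)
        rw [he] at h
        push_cast at h
        linarith
      have hone : y ^ (e + 1) * (n : ℝ) ^ s = 1 := by
        rw [hy, ← Real.rpow_natCast, ← Real.rpow_natCast, ← Real.rpow_mul hnpos.le,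
          ← Real.rpow_add hnpos]
        have : -φ * ((e + 1 : ℕ) : ℝ) + (s : ℝ) = 0 := by
          push_cast
          rw [her, hφ]
          have h1 : (s : ℝ) - 1 ≠ 0 := by linarith
          have h2 : (s : ℝ) + 2 ≠ 0 := by linarith
          field_simp
          ring
        rw [this, Real.rpow_zero]
      have hE : (n : ℝ) ^ (s + 1) * (2 * p) ^ ((s + 1).choose 2)
          = 2 * p * n * (2 * c) ^ (e + 1) := by
        rw [he, hp]
        calc (n : ℝ) ^ (s + 1) * (2 * (c * y)) ^ (e + 2)
            = 2 * (c * y) * n * (2 * c) ^ (e + 1) * (y ^ (e + 1) * (n : ℝ) ^ s) := by ring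
          _ = _ := by rw [hone, mul_one]
      rw [hE, div_mul_eq_mul_div, div_le_iff₀ (by positivity)]
      have hpow : (2 * c) ^ (e + 1) ≤ 2 * c := by
        rw [pow_succ]
        have : (2 * c) ^ e ≤ 1 := pow_le_one₀ (by positivity) (by linarith)
        nlinarith
      have hpn : p * n = 4 * r * X := by rw [hX]; field_simp
      calc r * (2 * p * n * (2 * c) ^ (e + 1)) ≤ r * (2 * p * n * (2 * c)) := by gcongr
        _ = (c * (128 * r ^ 2)) * (X / 8) := by
            rw [mul_assoc 2 p, hpn]; ring
        _ ≤ ε * (X / 8) := by gcongr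
        _ = 1 / 4 * (X / 2 * ε) := by ring
        _ ≤ 1 / 4 * (k * ε) := by gcongr
    linarith
  obtain ⟨H₀, hd, hPr⟩ := exists_three hm (by omega) (by omega) hk0 hp0.le hp1 hε A hA key
  refine ⟨Gof A H₀, ?_, hPr⟩
  intro v
  have hL : (1 - (s : ℝ) / (r : ℝ)) * n = n - s * m := by
    rw [hmr]; field_simp
  rw [hL]
  by_cases hv : v ∈ A
  · have h1 := (degR_in A H₀ v hv).2
    have h2 := hd v hv
    rw [hA] at h1
    have h' : (n : ℝ) ≤ degR (Gof A H₀) v + s * m := by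
      exact_mod_cast (by omega : n ≤ degR (Gof A H₀) v + s * m)
    linarith
  · have h' : (n : ℝ) ≤ degR (Gof A H₀) v + 1 := by exact_mod_cast degR_out A H₀ v hv
    nlinarith

/-- Theorem 1.3, lower bound: for `1 < s < r` and `ε > 0` there is `c > 0`
such that for all sufficiently large `n` divisible by `r` there is an `n`-vertex graph `G`
with minimum degree at least `(1 - s/r) n` such that with `p = c ⬝ p_s(n)` the probability
that `G ∪ G_{n,p}` has a `K_r`-factor is less than `ε`. -/
theorem statement1 (r s : ℕ) (hs : 1 < s) (hsr : s < r) (ε : ℝ) (hε : 0 < ε) :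
    ∃ c : ℝ, 0 < c ∧ ∃ n₀ : ℕ, ∀ n : ℕ, n₀ ≤ n → r ∣ n →
      ∃ G : SimpleGraph (Fin n),
        (∀ v, (1 - (s : ℝ) / (r : ℝ)) * n ≤ (degR G v : ℝ)) ∧
        Pr n (c * pThr s n) (fun H => HasCliqueFactor (G ⊔ H) r) < ε := by
  rcases Nat.lt_or_ge 2 s with h | h
  · have h2 : s ≠ 2 := by omega
    simp only [pThr, if_neg h2]
    exact case_three r s h hsr ε hε
  · have h2 : s = 2 := by omega
    subst h2
    simp only [pThr, if_true]
    exact ⟨1 / 4, by norm_num, case_two r hsr ε hε⟩
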